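/- Let R be a commutative ring, G an abelian group, and RG the group ring of G over R. If every flat RG-module has projective dimension at most n over RG, then every flat R-module has projective dimension at most n over R. (That is, cot.D(R) ≤ cot.D(RG).) -/

import Mathlib

open CategoryTheory

noncomputable section

universe u

/-- The `j`-th Ext group of the `R`-modules `M` and `N`. -/
def extGroup (R : Type u) [CommRing R] (M N : ModuleCat.{u} R) (j : ℕ) : ModuleCat R :=
  ((Ext R (ModuleCat.{u} R) j).obj (Opposite.op M)).obj N

/-- `Ext_R^j(M, N) = 0`. -/
def ExtVanish (R : Type u) [CommRing R] (M N : ModuleCat.{u} R) (j : ℕ) : Prop :=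
  Subsingleton (extGroup R M N j)

/-- The projective dimension of `M` is at most `n`
(via the standard Ext-vanishing characterization). -/
def ProjDimLE (R : Type u) [CommRing R] (M : ModuleCat.{u} R) (n : ℕ) : Prop :=
  ∀ (N : ModuleCat.{u} R) (j : ℕ), n < j → ExtVanish R M N j

/-- `M` has finite projective dimension. -/
def HasFinProjDim (R : Type u) [CommRing R] (M : ModuleCat.{u} R) : Prop :=
  ∃ n, ProjDimLE R M n

/-- `R` is a coherent ring: every finitely generated ideal is finitely presented. -/
def IsCoherentRing (R : Type u) [CommRing R] : Prop :=
  ∀ I : Ideal R, I.FG → Module.FinitePresentation R I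

/-!
Base change along any ring homomorphism does not raise the projective dimension of a *flat* module:
all syzygies of a flat module are flat, so its projective resolutions stay exact after tensoring.
Given an augmentation `S → R` of an `R`-algebra `S` (for a group ring, send every group element
to `1`), each flat `R`-module `F` is recovered as `R ⊗[S] (S ⊗[R] F)` from the flat `S`-module
`S ⊗[R] F`, and so inherits the bound on projective dimensions of flat `S`-modules.
-/

section ProjectiveResolution

universe v w

variable {C : Type u} [Category.{v} C] [Abelian C] {X : C} (P : ProjectiveResolution X)
  (Y : C) (j : ℕ)

lemma subsingleton_linearYonedaObj_homology_succ_iff (R : Type*) [Ring R] [Linear R C] :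
    Subsingleton ((P.complex.linearYonedaObj R Y).homology (j + 1)) ↔
      ∀ f : P.complex.X (j + 1) ⟶ Y, P.complex.d (j + 2) (j + 1) ≫ f = 0 →
        ∃ g : P.complex.X j ⟶ Y, P.complex.d (j + 1) j ≫ g = f := by
  rw [← ModuleCat.isZero_iff_subsingleton,
    ← HomologicalComplex.exactAt_iff_isZero_homology,
    HomologicalComplex.exactAt_iff' _ j (j + 1) (j + 2) (by simp) (by simp),
    ShortComplex.moduleCat_exact_iff]
  rfl

lemma subsingleton_ext_succ_iff [HasExt.{w} C] :
    Subsingleton (Abelian.Ext X Y (j + 1)) ↔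
      ∀ f : P.complex.X (j + 1) ⟶ Y, P.complex.d (j + 2) (j + 1) ≫ f = 0 →
        ∃ g : P.complex.X j ⟶ Y, P.complex.d (j + 1) j ≫ g = f := by
  rw [subsingleton_iff_forall_eq 0]
  constructor
  · intro h f hf
    rw [← P.extMk_eq_zero_iff f (j + 2) rfl hf j rfl]
    exact h _
  · intro h α
    obtain ⟨f, hf, rfl⟩ := P.extMk_surjective α (j + 2) rfl
    exact (P.extMk_eq_zero_iff f _ rfl hf j rfl).2 (h f hf)

end ProjectiveResolution

lemma extVanish_succ_iff (R : Type u) [CommRing R] (M N : ModuleCat.{u} R) (j : ℕ) :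
    ExtVanish R M N (j + 1) ↔ Subsingleton (Abelian.Ext.{u} M N (j + 1)) := by
  let P := projectiveResolution M
  rw [subsingleton_ext_succ_iff P,
    ← subsingleton_linearYonedaObj_homology_succ_iff P N j R]
  exact (P.isoExt (j + 1) N).toLinearEquiv.toEquiv.subsingleton_congr

lemma projDimLE_iff_hasProjectiveDimensionLE (R : Type u) [CommRing R] (M : ModuleCat.{u} R)
    (n : ℕ) : ProjDimLE R M n ↔ HasProjectiveDimensionLE M n := by
  constructor
  · intro h
    refine HasProjectiveDimensionLT.mk.{u} fun j hj Y e ↦ ?_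
    obtain ⟨j, rfl⟩ : ∃ i, j = i + 1 := Nat.exists_eq_add_one.2 (by lia)
    exact ((extVanish_succ_iff R M Y j).1 (h Y _ hj)).elim e 0
  · intro h N j hj
    obtain ⟨j, rfl⟩ : ∃ i, j = i + 1 := Nat.exists_eq_add_one.2 (by lia)
    exact (extVanish_succ_iff R M N j).2
      (HasProjectiveDimensionLT.subsingleton M (n + 1) (j + 1) hj N)

section BaseChange

open TensorProduct

universe v w

variable {R : Type u} [CommRing R]

lemma flat_of_exact_of_flat {M N P : Type*} [AddCommGroup M] [Module R M] [AddCommGroup N]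
    [Module R N] [Module.Flat R N] [AddCommGroup P] [Module R P] [Module.Flat R P]
    {f : M →ₗ[R] N} {g : N →ₗ[R] P} (hf : Function.Injective f) (hfg : Function.Exact f g)
    (hg : Function.Surjective g) : Module.Flat R M := by
  rw [Module.Flat.iff_rTensor_injective']
  intro I
  have h_left : Function.Injective (f.lTensor I) :=
    g.lTensor_injective_of_exact_of_flat hg f hf hfg I
  have h_right : Function.Injective (I.subtype.rTensor N) :=
    Module.Flat.rTensor_preserves_injective_linearMap _ I.subtype_injective
  have h_comp : f.lTensor R ∘ₗ I.subtype.rTensor M = I.subtype.rTensor N ∘ₗ f.lTensor I := by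
    rw [LinearMap.lTensor_comp_rTensor, LinearMap.rTensor_comp_lTensor]
  refine .of_comp (f := f.lTensor R) ?_
  rw [← LinearMap.coe_comp, h_comp]
  exact h_right.comp h_left

variable (S : Type w) [Ring S] [Algebra R S]

lemma shortExact_baseChange_of_flat {X : ShortComplex (ModuleCat.{v} R)} (hX : X.ShortExact)
    [Module.Flat R X.X₃] :
    (ModuleCat.shortComplexOfCompEqZero (X.f.hom.baseChange S) (X.g.hom.baseChange S)
      (by rw [← LinearMap.baseChange_comp, ← ModuleCat.hom_comp, X.zero]; simp)).ShortExact := by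
  have h_exact := (ShortComplex.ShortExact.moduleCat_exact_iff_function_exact X).1 hX.exact
  have hg := hX.moduleCat_surjective_g
  exact
    { exact := (ShortComplex.ShortExact.moduleCat_exact_iff_function_exact _).2
        (lTensor_exact S h_exact hg)
      mono_f := (ModuleCat.mono_iff_injective _).2 <|
        X.g.hom.lTensor_injective_of_exact_of_flat hg _ hX.moduleCat_injective_f h_exact S
      epi_g := (ModuleCat.epi_iff_surjective _).2 (X.g.hom.lTensor_surjective S hg) }

lemma hasProjectiveDimensionLE_baseChange_of_flat [Small.{v} R] (M : ModuleCat.{v} R)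
    [Module.Flat R M] (n : ℕ) [HasProjectiveDimensionLE M n] :
    HasProjectiveDimensionLE (ModuleCat.of S (S ⊗[R] M)) n := by
  induction n generalizing M with
  | zero =>
    have : Projective M := (projective_iff_hasProjectiveDimensionLE_zero M).2 ‹_›
    have : Module.Projective R M := (IsProjective.iff_projective M).2 this
    rw [← projective_iff_hasProjectiveDimensionLE_zero]
    exact ModuleCat.projective_of_categoryTheory_projective (.of S (S ⊗[R] M))
  | succ n ih =>
    let X := M.projectiveShortComplex
    have hX : X.ShortExact := M.shortExact_projectiveShortComplex
    have hSX := shortExact_baseChange_of_flat S hX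
    have : Module.Flat R X.X₁ := flat_of_exact_of_flat hX.moduleCat_injective_f
      ((ShortComplex.ShortExact.moduleCat_exact_iff_function_exact X).1 hX.exact)
      hX.moduleCat_surjective_g
    have : HasProjectiveDimensionLE X.X₁ n :=
      (hX.hasProjectiveDimensionLT_X₃_iff n inferInstance).1 ‹_›
    exact (hSX.hasProjectiveDimensionLT_X₃_iff n
      (ModuleCat.projective_of_categoryTheory_projective (.of S (S ⊗[R] X.X₂)))).2 (ih X.X₁)

lemma hasProjectiveDimensionLE_of_baseChange {S : Type w} [CommRing S] [Algebra R S]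
    (ε : S →ₐ[R] R) [Small.{v} R] (M : ModuleCat.{v} R) [Module.Flat R M] (n : ℕ)
    [HasProjectiveDimensionLE (ModuleCat.of S (S ⊗[R] M)) n] : HasProjectiveDimensionLE M n := by
  algebraize [ε.toRingHom]
  have : IsScalarTower R S R := .of_algHom ε
  have := hasProjectiveDimensionLE_baseChange_of_flat R (ModuleCat.of S (S ⊗[R] M)) n
  let e : R ⊗[S] (S ⊗[R] M) ≃ₗ[R] M :=
    AlgebraTensorModule.cancelBaseChange R S R R M ≪≫ₗ TensorProduct.lid R M
  exact ModuleCat.hasProjectiveDimensionLE_of_linearEquiv.{max u v w, v}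
    (M := .of R (R ⊗[S] (S ⊗[R] M))) e n

end BaseChange

theorem stmt8_general (R S : Type u) [CommRing R] [CommRing S] [Algebra R S] (ε : S →ₐ[R] R)
    (n : ℕ) (h : ∀ F : ModuleCat.{u} S, Module.Flat S F → ProjDimLE S F n)
    (F : ModuleCat.{u} R) (hF : Module.Flat R F) : ProjDimLE R F n := by
  simp only [projDimLE_iff_hasProjectiveDimensionLE] at h ⊢
  have := h (.of S (TensorProduct R S F)) inferInstance
  exact hasProjectiveDimensionLE_of_baseChange ε F n

theorem stmt8 (R : Type u) [CommRing R] (G : Type u) [CommGroup G] (n : ℕ)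
    (h : ∀ (F : ModuleCat.{u} (MonoidAlgebra R G)), Module.Flat (MonoidAlgebra R G) F →
      ProjDimLE (MonoidAlgebra R G) F n) :
    ∀ (F : ModuleCat.{u} R), Module.Flat R F → ProjDimLE R F n :=
  stmt8_general R (MonoidAlgebra R G) (MonoidAlgebra.lift R R G 1) n h

end
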